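/- Let Γ be a nontrivial finite group. There exists a natural number k₀ (depending only on Γ) such that: for every fixed point free orthogonal representation ρ: Γ → O(n+1) that decomposes as an orthogonal direct sum of k ≥ k₀ irreducible subrepresentations, the quotient S^n/ρ(Γ) has radius π/2. -/

import Mathlib

open scoped RealInnerProductSpace

section Defs

variable {Γ : Type*} [Group Γ] {E : Type*} [NormedAddCommGroup E] [InnerProductSpace ℝ E]

/-- A subspace `W` is invariant under the orthogonal representation `ρ`. -/
def IsInvariantSubspace (ρ : Γ →* (E ≃ₗᵢ[ℝ] E)) (W : Submodule ℝ E) : Prop :=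
  ∀ g : Γ, ∀ x ∈ W, ρ g x ∈ W

/-- A nonzero invariant subspace `W` is an irreducible subrepresentation of `ρ` if it
contains no invariant subspace other than `⊥` and itself. -/
def IsIrreducibleSubrep (ρ : Γ →* (E ≃ₗᵢ[ℝ] E)) (W : Submodule ℝ E) : Prop :=
  W ≠ ⊥ ∧ IsInvariantSubspace ρ W ∧
    ∀ U : Submodule ℝ E, U ≤ W → IsInvariantSubspace ρ U → U = ⊥ ∨ U = W

/-- The radius of the spherical space form `Sⁿ/ρ(Γ)`:
`rad = min over orbits Γu of max over orbits Γv of dist(Γu,Γv)`, where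
`dist(Γu,Γv) = min_{g∈Γ} arccos ⟪ρ(g)u, v⟫`. -/
noncomputable def sphereQuotRadius [Fintype Γ] (ρ : Γ →* (E ≃ₗᵢ[ℝ] E)) : ℝ :=
  ⨅ u : {x : E // ‖x‖ = 1}, ⨆ v : {x : E // ‖x‖ = 1}, ⨅ g : Γ,
    Real.arccos ⟪ρ g u.1, v.1⟫

end Defs

/-!
When the action has no common nonzero fixed vector, every orbit sums to zero, because its sum is
fixed. Hence `∑ g, ⟪ρ g u, v⟫ = 0`, so some `⟪ρ g u, v⟫` is nonnegative and no two orbits are more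
than `π / 2` apart. On the other hand the vanishing of the sum is a linear relation, so an orbit
spans a subspace of dimension less than `|Γ|`; once the dimension of the whole space is at least
`|Γ|`, a unit vector orthogonal to that subspace lies at distance exactly `π / 2` from the orbit.
The dimension is at least the number of nonzero summands in an orthogonal decomposition, so
`k₀ = |Γ|` works.
-/

section Orthogonality

universe u v

variable {𝕜 : Type*} {E : Type v} [RCLike 𝕜] [NormedAddCommGroup E] [InnerProductSpace 𝕜 E]

theorem lift_mk_le_lift_rank_of_pairwise_isOrtho {ι : Type u} {V : ι → Submodule 𝕜 E}
    (hV : Pairwise fun i j => V i ⟂ V j) (hne : ∀ i, V i ≠ ⊥) :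
    Cardinal.lift.{v} (Cardinal.mk ι) ≤ Cardinal.lift.{u} (Module.rank 𝕜 E) := by
  rw [← (Equiv.subtypeUnivEquiv hne).cardinal_eq]
  exact (OrthogonalFamily.of_pairwise hV).independent.subtype_ne_bot_le_rank

theorem exists_norm_eq_one_mem_orthogonal {W : Submodule 𝕜 E} [W.HasOrthogonalProjection]
    (hW : W ≠ ⊤) : ∃ v ∈ Wᗮ, ‖v‖ = 1 := by
  obtain ⟨w, hw, hw0⟩ := (Submodule.ne_bot_iff _).1 (mt Submodule.orthogonal_eq_bot_iff.1 hW)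
  exact ⟨(‖w‖⁻¹ : 𝕜) • w, Wᗮ.smul_mem _ hw, norm_smul_inv_norm hw0⟩

end Orthogonality

section Orbits

variable {Γ : Type*} [Group Γ] {E : Type*} [NormedAddCommGroup E] [InnerProductSpace ℝ E]
  {ρ : Γ →* (E ≃ₗᵢ[ℝ] E)}

/-- The linear span of the orbit of `u` under the orthogonal representation `ρ`, which is the
smallest invariant subspace containing `u`. -/
def orbitSpan (ρ : Γ →* (E ≃ₗᵢ[ℝ] E)) (u : E) : Submodule ℝ E :=
  Submodule.span ℝ (Set.range fun g => ρ g u)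

/-- The distance in the quotient of the unit sphere by `ρ` between the orbits of the unit vectors
`u` and `v`. As in `sphereQuotRadius`, it is written as an infimum of angles over the group. -/
noncomputable def sphereQuotDist (ρ : Γ →* (E ≃ₗᵢ[ℝ] E)) (u v : E) : ℝ :=
  ⨅ g, Real.arccos ⟪ρ g u, v⟫

instance finiteDimensional_orbitSpan [Finite Γ] (ρ : Γ →* (E ≃ₗᵢ[ℝ] E)) (u : E) :
    FiniteDimensional ℝ (orbitSpan ρ u) :=
  FiniteDimensional.span_of_finite ℝ (Set.finite_range _)

theorem sphereQuotDist_le_arccos (ρ : Γ →* (E ≃ₗᵢ[ℝ] E)) (u v : E) (g : Γ) :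
    sphereQuotDist ρ u v ≤ Real.arccos ⟪ρ g u, v⟫ :=
  ciInf_le ⟨0, Set.forall_mem_range.2 fun _ => Real.arccos_nonneg _⟩ g

theorem sphereQuotDist_eq_pi_div_two_of_mem_orthogonal {u v : E} (hv : v ∈ (orbitSpan ρ u)ᗮ) :
    sphereQuotDist ρ u v = Real.pi / 2 := by
  have hinner (g : Γ) : ⟪ρ g u, v⟫ = 0 :=
    Submodule.inner_right_of_mem_orthogonal (Submodule.subset_span (Set.mem_range_self g)) hv
  simp only [sphereQuotDist, hinner, Real.arccos_zero, ciInf_const]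

theorem eq_zero_of_forall_map_eq_self [Nontrivial Γ] (hfree : ∀ g, g ≠ 1 → ∀ x, x ≠ 0 → ρ g x ≠ x)
    (x : E) (hx : ∀ g, ρ g x = x) : x = 0 := by
  obtain ⟨h, hh⟩ := exists_ne (1 : Γ)
  exact by_contra fun hx0 => hfree h hh x hx0 (hx h)

theorem map_sum_orbit [Fintype Γ] (ρ : Γ →* (E ≃ₗᵢ[ℝ] E)) (h : Γ) (u : E) :
    ρ h (∑ g, ρ g u) = ∑ g, ρ g u := by
  calc ρ h (∑ g, ρ g u) = ∑ g, ρ (h * g) u := by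
        simp only [map_sum, map_mul, LinearIsometryEquiv.coe_mul, Function.comp_apply]
    _ = ∑ g, ρ g u := Fintype.sum_equiv (Equiv.mulLeft h) _ _ fun _ => rfl

theorem sum_orbit_eq_zero [Fintype Γ] (hfix : ∀ x, (∀ g, ρ g x = x) → x = 0) (u : E) :
    ∑ g, ρ g u = 0 :=
  hfix _ fun h => map_sum_orbit ρ h u

theorem finrank_orbitSpan_lt_card [Fintype Γ] (hfix : ∀ x, (∀ g, ρ g x = x) → x = 0) (u : E) :
    Module.finrank ℝ (orbitSpan ρ u) < Fintype.card Γ := by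
  by_contra! hcard
  have hli : LinearIndependent ℝ fun g => ρ g u :=
    linearIndependent_iff_card_le_finrank_span.2 hcard
  have hrel : ∑ g, (1 : ℝ) • ρ g u = 0 := by simpa only [one_smul] using sum_orbit_eq_zero hfix u
  exact one_ne_zero (Fintype.linearIndependent_iff.1 hli 1 hrel 1)

theorem orbitSpan_ne_top [Fintype Γ] (hfix : ∀ x, (∀ g, ρ g x = x) → x = 0)
    (hrank : (Fintype.card Γ : Cardinal) ≤ Module.rank ℝ E) (u : E) : orbitSpan ρ u ≠ ⊤ := by
  intro htop
  have hlt : Module.rank ℝ (orbitSpan ρ u) < Fintype.card Γ := by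
    rw [← Module.finrank_eq_rank]
    exact_mod_cast finrank_orbitSpan_lt_card hfix u
  rw [htop, rank_top] at hlt
  exact hlt.not_ge hrank

theorem sphereQuotDist_le_pi_div_two [Finite Γ] (hfix : ∀ x, (∀ g, ρ g x = x) → x = 0) (u v : E) :
    sphereQuotDist ρ u v ≤ Real.pi / 2 := by
  have := Fintype.ofFinite Γ
  have hsum : ∑ g, ⟪ρ g u, v⟫ = 0 := by
    rw [← sum_inner, sum_orbit_eq_zero hfix, inner_zero_left]
  obtain ⟨g, -, hg⟩ : ∃ g ∈ Finset.univ, 0 ≤ ⟪ρ g u, v⟫ :=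
    Finset.exists_le_of_sum_le Finset.univ_nonempty (by simp [hsum])
  exact (sphereQuotDist_le_arccos ρ u v g).trans (Real.arccos_le_pi_div_two.2 hg)

theorem iSup_sphereQuotDist_eq_pi_div_two [Finite Γ] (hfix : ∀ x, (∀ g, ρ g x = x) → x = 0) {u : E}
    (hu : orbitSpan ρ u ≠ ⊤) :
    ⨆ v : {x : E // ‖x‖ = 1}, sphereQuotDist ρ u v = Real.pi / 2 := by
  obtain ⟨v, hv, hnorm⟩ := exists_norm_eq_one_mem_orthogonal hu
  have hmax : IsGreatest (Set.range fun v : {x : E // ‖x‖ = 1} => sphereQuotDist ρ u v)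
      (Real.pi / 2) :=
    ⟨⟨⟨v, hnorm⟩, sphereQuotDist_eq_pi_div_two_of_mem_orthogonal hv⟩,
      Set.forall_mem_range.2 fun w => sphereQuotDist_le_pi_div_two hfix u w⟩
  exact hmax.csSup_eq

theorem sphereQuotRadius_eq_pi_div_two [Fintype Γ] [Nontrivial E]
    (hfix : ∀ x, (∀ g, ρ g x = x) → x = 0)
    (hspan : ∀ u : E, ‖u‖ = 1 → orbitSpan ρ u ≠ ⊤) : sphereQuotRadius ρ = Real.pi / 2 := by
  obtain ⟨u, hu⟩ := exists_norm_eq E zero_le_one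
  have : Nonempty {x : E // ‖x‖ = 1} := ⟨⟨u, hu⟩⟩
  calc sphereQuotRadius ρ
      = ⨅ u : {x : E // ‖x‖ = 1}, ⨆ v : {x : E // ‖x‖ = 1}, sphereQuotDist ρ u v := rfl
    _ = ⨅ _ : {x : E // ‖x‖ = 1}, Real.pi / 2 :=
        iInf_congr fun u => iSup_sphereQuotDist_eq_pi_div_two hfix (hspan u u.2)
    _ = Real.pi / 2 := ciInf_const

theorem exists_k0_radius_eq_half_pi_general [Fintype Γ] (hfix : ∀ x, (∀ g, ρ g x = x) → x = 0)
    (hrank : (Fintype.card Γ : Cardinal) ≤ Module.rank ℝ E) :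
    sphereQuotRadius ρ = Real.pi / 2 := by
  have : Nontrivial E := by
    rw [← rank_pos_iff_nontrivial (R := ℝ)]
    exact (Nat.cast_pos.2 Fintype.card_pos).trans_le hrank
  exact sphereQuotRadius_eq_pi_div_two hfix fun u _ => orbitSpan_ne_top hfix hrank u

end Orbits

/-- For every nontrivial finite group `Γ` there is a `k₀` (depending only on `Γ`) such
that every fixed point free orthogonal representation `ρ : Γ → O(n+1)` decomposing as an
orthogonal direct sum of `k ≥ k₀` irreducible subrepresentations yields a space form
`Sⁿ/ρ(Γ)` of radius `π/2`. -/
theorem exists_k0_radius_eq_half_pi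
    {Γ : Type*} [Group Γ] [Fintype Γ] [Nontrivial Γ] :
    ∃ k₀ : ℕ, ∀ (n k : ℕ)
      (ρ : Γ →* (EuclideanSpace ℝ (Fin (n + 1)) ≃ₗᵢ[ℝ] EuclideanSpace ℝ (Fin (n + 1))))
      (V : Fin k → Submodule ℝ (EuclideanSpace ℝ (Fin (n + 1)))),
      (∀ g : Γ, g ≠ 1 → ∀ x : EuclideanSpace ℝ (Fin (n + 1)), x ≠ 0 → ρ g x ≠ x) →
      (∀ i j, i ≠ j → ∀ x ∈ V i, ∀ y ∈ V j, ⟪x, y⟫ = 0) →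
      (⨆ i, V i) = ⊤ →
      (∀ i, IsIrreducibleSubrep ρ (V i)) →
      k₀ ≤ k →
      sphereQuotRadius ρ = Real.pi / 2 := by
  refine ⟨Fintype.card Γ, fun n k ρ V hfree horth _ hirr hk =>
    exists_k0_radius_eq_half_pi_general (eq_zero_of_forall_map_eq_self hfree)
      ((Nat.cast_le.2 hk).trans ?_)⟩
  simpa only [Cardinal.mk_fin, Cardinal.lift_natCast, Cardinal.lift_id] using
    lift_mk_le_lift_rank_of_pairwise_isOrtho
      (fun i j hij => Submodule.isOrtho_iff_inner_eq.2 (horth i j hij)) fun i => (hirr i).1
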